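/- arXiv:0707.1588 — 5 statements merged into one kernel-verified Lean document; each statement's English description precedes it below -/
import Mathlib

section
/- Let m > 0 and let M be a positive integer. For s > 0 define f_A(ξ; s) = f_γ((2^ξ − 1)/s) · 2^ξ ln 2 / ( s · F_γ((2^M − 1)/s) ) for 0 ≤ ξ ≤ M (the density of the conditional random variable A(s)). Then for every fixed ξ with 0 < ξ ≤ M, lim_{s → ∞} f_A(ξ; s) = m (2^ξ − 1)^{m−1} 2^ξ ln 2 / (2^M − 1)^m; in particular the limiting density is independent of s. -/
open MeasureTheory ProbabilityTheory Real Filter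

/-- Density of the Nakagami-m fading power gain (Gamma distribution, shape m, rate m). -/
noncomputable def fgamma (m x : ℝ) : ℝ :=
  if 0 ≤ x then m ^ m * x ^ (m - 1) * Real.exp (-(m * x)) / Real.Gamma m else 0

/-- The Nakagami-m fading power gain law μ_m. -/
noncomputable def muN (m : ℝ) : Measure ℝ :=
  MeasureTheory.volume.withDensity fun x => ENNReal.ofReal (fgamma m x)

/-- CDF of μ_m. -/
noncomputable def Fgamma (m x : ℝ) : ℝ := ∫ t in (0:ℝ)..x, fgamma m t

/-- Law of A(s) = log₂(1+γs) for γ ∼ μ_m conditioned on {γ ≤ (2^M-1)/s}. -/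
noncomputable def nuA (m : ℝ) (M : ℕ) (s : ℝ) : Measure ℝ :=
  Measure.map (fun x => Real.logb 2 (1 + x * s))
    ((muN m)[|{x : ℝ | x ≤ ((2:ℝ) ^ M - 1) / s}])


/-- The density of A(s). -/
noncomputable def fA (m : ℝ) (M : ℕ) (s ξ : ℝ) : ℝ :=
  if 0 ≤ ξ ∧ ξ ≤ (M : ℝ) then
    fgamma m (((2:ℝ) ^ ξ - 1) / s) * ((2:ℝ) ^ ξ * Real.log 2)
      / (s * Fgamma m (((2:ℝ) ^ M - 1) / s))
  else 0

theorem fgamma_bounds (m : ℝ) (hm : 0 < m) (x : ℝ) (hx : 0 < x) :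
    m ^ m / Real.Gamma m / m * Real.exp (-(m * x)) ≤ Fgamma m x / x ^ m ∧
    Fgamma m x / x ^ m ≤ m ^ m / Real.Gamma m / m := by
  have hG := Real.Gamma_pos_of_pos hm
  have hC : 0 < m ^ m / Real.Gamma m := div_pos (Real.rpow_pos_of_pos hm m) hG
  set C := m ^ m / Real.Gamma m with hCdef
  have hxm : 0 < x ^ m := Real.rpow_pos_of_pos hx m
  have hF : Fgamma m x = ∫ t in (0:ℝ)..x, C * (t ^ (m - 1) * Real.exp (-(m * t))) := by
    unfold Fgamma
    apply intervalIntegral.integral_congr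
    intro t ht
    rw [Set.uIcc_of_le hx.le] at ht
    simp only [fgamma, if_pos ht.1, hCdef]
    ring
  have hi : IntervalIntegrable (fun t : ℝ => t ^ (m - 1)) volume 0 x :=
    intervalIntegral.intervalIntegrable_rpow' (by linarith)
  have hint : ∫ t in (0:ℝ)..x, t ^ (m - 1) = x ^ m / m := by
    rw [integral_rpow (Or.inl (by linarith))]
    simp [Real.zero_rpow hm.ne']
  have hi2 : IntervalIntegrable (fun t : ℝ => t ^ (m - 1) * Real.exp (-(m * t))) volume 0 x :=
    hi.mul_continuousOn (by fun_prop)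
  have up : ∫ t in (0:ℝ)..x, t ^ (m - 1) * Real.exp (-(m * t)) ≤ x ^ m / m := by
    rw [← hint]
    apply intervalIntegral.integral_mono_on hx.le hi2 hi
    intro t ht
    apply mul_le_of_le_one_right (Real.rpow_nonneg ht.1 _)
    rw [Real.exp_le_one_iff]
    have := mul_nonneg hm.le ht.1
    linarith
  have lo : x ^ m / m * Real.exp (-(m * x)) ≤
      ∫ t in (0:ℝ)..x, t ^ (m - 1) * Real.exp (-(m * t)) := by
    rw [← hint, ← intervalIntegral.integral_mul_const]
    apply intervalIntegral.integral_mono_on hx.le (hi.mul_const _) hi2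
    intro t ht
    apply mul_le_mul_of_nonneg_left _ (Real.rpow_nonneg ht.1 _)
    rw [Real.exp_le_exp]
    have := mul_le_mul_of_nonneg_left ht.2 hm.le
    linarith
  rw [hF, intervalIntegral.integral_const_mul, le_div_iff₀ hxm, div_le_iff₀ hxm]
  constructor
  · refine le_trans (le_of_eq ?_) (mul_le_mul_of_nonneg_left lo hC.le)
    ring
  · refine (mul_le_mul_of_nonneg_left up hC.le).trans (le_of_eq ?_)
    ring

/-- pointwise limit of the density of A(s) as s → ∞. -/
theorem stmt_2 (m : ℝ) (hm : 0 < m) (M : ℕ) (hM : 0 < M)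
    (ξ : ℝ) (hξ0 : 0 < ξ) (hξM : ξ ≤ (M : ℝ)) :
    Filter.Tendsto (fun s : ℝ => fA m M s ξ) Filter.atTop
      (nhds (m * ((2:ℝ) ^ ξ - 1) ^ (m - 1) * (2:ℝ) ^ ξ * Real.log 2
        / ((2:ℝ) ^ M - 1) ^ m)) := by
  have hG := Real.Gamma_pos_of_pos hm
  have hC : 0 < m ^ m / Real.Gamma m := div_pos (Real.rpow_pos_of_pos hm m) hG
  have ha : 0 < (2:ℝ) ^ ξ - 1 := by
    have := Real.one_lt_rpow (x := 2) (by norm_num) hξ0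
    linarith
  have hb : 0 < (2:ℝ) ^ M - 1 := by
    have := one_lt_pow₀ (a := (2:ℝ)) (by norm_num) hM.ne'
    linarith
  set C := m ^ m / Real.Gamma m with hCdef
  have hlim : ∀ c : ℝ, Tendsto (fun s : ℝ => Real.exp (-(m * (c / s)))) atTop (nhds 1) := by
    intro c
    have h1 : Tendsto (fun s : ℝ => c / s) atTop (nhds 0) := tendsto_const_nhds.div_atTop tendsto_id
    have h2 := (Real.continuous_exp.tendsto _).comp (h1.const_mul m).neg
    simpa [Function.comp_def] using h2
  have hR : Tendsto (fun s : ℝ => Fgamma m (((2:ℝ) ^ M - 1) / s) / (((2:ℝ) ^ M - 1) / s) ^ m)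
      atTop (nhds (C / m)) := by
    have h1 := (hlim ((2:ℝ) ^ M - 1)).const_mul (C / m)
    rw [mul_one] at h1
    refine tendsto_of_tendsto_of_tendsto_of_le_of_le' h1 tendsto_const_nhds ?_ ?_
    · filter_upwards [eventually_gt_atTop 0] with s hs
      exact (fgamma_bounds m hm _ (div_pos hb hs)).1
    · filter_upwards [eventually_gt_atTop 0] with s hs
      exact (fgamma_bounds m hm _ (div_pos hb hs)).2
  have hN := ((hlim ((2:ℝ) ^ ξ - 1)).const_mul
    (C * ((2:ℝ) ^ ξ - 1) ^ (m - 1) * ((2:ℝ) ^ ξ * Real.log 2) / ((2:ℝ) ^ M - 1) ^ m)).div hR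
    (div_pos hC hm).ne'
  have hbm : 0 < ((2:ℝ) ^ M - 1) ^ m := Real.rpow_pos_of_pos hb m
  have hval : C * ((2:ℝ) ^ ξ - 1) ^ (m - 1) * ((2:ℝ) ^ ξ * Real.log 2) / ((2:ℝ) ^ M - 1) ^ m * 1
      / (C / m) = m * ((2:ℝ) ^ ξ - 1) ^ (m - 1) * (2:ℝ) ^ ξ * Real.log 2
        / ((2:ℝ) ^ M - 1) ^ m := by
    field_simp
  rw [hval] at hN
  refine hN.congr' ?_
  filter_upwards [eventually_gt_atTop 0] with s hs
  have hF : 0 < Fgamma m (((2:ℝ) ^ M - 1) / s) := by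
    have h := (fgamma_bounds m hm _ (div_pos hb hs)).1
    have h3 : 0 < Fgamma m (((2:ℝ) ^ M - 1) / s) / (((2:ℝ) ^ M - 1) / s) ^ m :=
      lt_of_lt_of_le (mul_pos (div_pos hC hm) (Real.exp_pos _)) h
    exact (div_pos_iff_of_pos_right (Real.rpow_pos_of_pos (div_pos hb hs) m)).1 h3
  have hsm : 0 < s ^ m := Real.rpow_pos_of_pos hs m
  simp only [Pi.div_apply]
  rw [fA, if_pos ⟨hξ0.le, hξM⟩, fgamma, if_pos (div_pos ha hs).le]
  generalize Fgamma m (((2:ℝ) ^ M - 1) / s) = F at *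
  generalize Real.exp (-(m * (((2:ℝ) ^ ξ - 1) / s))) = E at *
  rw [Real.div_rpow hb.le hs.le, Real.div_rpow ha.le hs.le, Real.rpow_sub_one hs.ne', hCdef]
  field_simp
end

section
/- Let m > 0, let B and M be positive integers, let s > 0, and let 0 < R ≤ M. Let γ_1, …, γ_B be i.i.d. random variables with law μ_m, set p = Pr(γ_1 > (2^M − 1)/s), and let ν_s denote the law of A(s) (the law of log₂(1 + γ s) for γ ∼ μ_m conditioned on {γ ≤ (2^M − 1)/s}). Then Pr( Σ_{b=1}^B min(M, log₂(1 + γ_b s)) < B R ) = Σ_{t=0}^{⌈BR/M⌉ − 1} C(B, t) p^t (1 − p)^{B − t} · ν_s^{⊗(B−t)}( { a ∈ ℝ^{B−t} : Σ_{k=1}^{B−t} a_k < B R − t M } ), where C(B, t) is the binomial coefficient. -/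
open MeasureTheory ProbabilityTheory Real Filter

/-- Distribution function of the sum of `n` independent copies. -/
noncomputable def sumCdf (ν : Measure ℝ) (n : ℕ) (x : ℝ) : ENNReal :=
  (Measure.pi fun _ : Fin n => ν) {a : Fin n → ℝ | ∑ k, a k < x}

lemma sumCdf_measurable (ν : Measure ℝ) (n : ℕ) : Measurable (sumCdf ν n) := by
  apply Monotone.measurable
  intro x y hxy
  exact measure_mono fun a (ha : _ < x) => lt_of_lt_of_le ha hxy

lemma sumCdf_succ (ν : Measure ℝ) [IsFiniteMeasure ν] (n : ℕ) (x : ℝ) :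
    sumCdf ν (n + 1) x = ∫⁻ a, sumCdf ν n (x - a) ∂ν := by
  have h := measurePreserving_piFinSuccAbove (fun _ : Fin (n + 1) => ν) 0
  have hS : MeasurableSet {z : ℝ × (Fin n → ℝ) | z.1 + ∑ k, z.2 k < x} :=
    measurableSet_lt (by fun_prop) (by fun_prop)
  have h1 := h.measure_preimage hS.nullMeasurableSet
  rw [Measure.prod_apply hS] at h1
  unfold sumCdf
  convert h1 using 2
  · ext a
    simp [MeasurableEquiv.piFinSuccAbove, Fin.sum_univ_succ, Fin.tail]
  · ext a
    congr 1
    ext b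
    simp [lt_sub_iff_add_lt']

lemma sumCdf_mix (ν : Measure ℝ) [IsFiniteMeasure ν] (p q : ENNReal) (c : ℝ)
    [IsFiniteMeasure (q • ν + p • Measure.dirac c)] (n : ℕ) (x : ℝ) :
    sumCdf (q • ν + p • Measure.dirac c) n x
      = ∑ ij ∈ Finset.HasAntidiagonal.antidiagonal n, n.choose ij.1 •
          (p ^ ij.1 * q ^ ij.2 * sumCdf ν ij.2 (x - ij.1 * c)) := by
  induction n generalizing x with
  | zero => 
    simp [sumCdf, Measure.pi_of_empty (fun _ : Fin 0 => q • ν + p • Measure.dirac c),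
      Measure.pi_of_empty (fun _ : Fin 0 => ν)]
  | succ n ih =>
    rw [sumCdf_succ, lintegral_add_measure, lintegral_smul_measure, lintegral_smul_measure,
      lintegral_dirac]
    rw [Finset.sum_antidiagonal_choose_succ_nsmul
      (fun i j => p ^ i * q ^ j * sumCdf ν j (x - i * c)) n]
    congr 1
    · simp_rw [ih]
      have hm : ∀ (j : ℕ) (y : ℝ), Measurable fun a => sumCdf ν j (x - a - y) := fun j y =>
        (sumCdf_measurable _ j).comp (by fun_prop : Measurable fun a => x - a - y)
      rw [lintegral_finsetSum _ (fun ij _ => by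
        simp only [nsmul_eq_mul]
        exact ((hm _ _).const_mul _).const_mul _)]
      rw [smul_eq_mul, Finset.mul_sum]
      refine Finset.sum_congr rfl fun ij _ => ?_
      simp only [nsmul_eq_mul]
      rw [lintegral_const_mul _ ((hm _ _).const_mul _), lintegral_const_mul _ (hm _ _),
        sumCdf_succ]
      simp_rw [sub_right_comm x _ ((ij.1 : ℝ) * c)]
      ring
    · rw [ih, smul_eq_mul, Finset.mul_sum]
      refine Finset.sum_congr rfl fun ij hij => ?_
      simp only [nsmul_eq_mul]
      rw [← Finset.HasAntidiagonal.mem_antidiagonal.mp hij, Nat.choose_symm_add]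
      have : x - c - ij.1 * c = x - ((ij.1 + 1 : ℕ) : ℝ) * c := by push_cast; ring
      rw [this]
      ring

lemma muN_eq (m : ℝ) : muN m = gammaMeasure m m := by
  unfold muN gammaMeasure gammaPDF gammaPDFReal fgamma
  congr 1
  ext x
  congr 1
  split_ifs
  · ring
  · rfl

lemma muN_nonneg (m : ℝ) : ∀ᵐ x ∂(muN m), 0 ≤ x := by
  rw [ae_iff]
  have : {x : ℝ | ¬ 0 ≤ x} = Set.Iio 0 := by ext; simp
  rw [this, muN, withDensity_apply _ measurableSet_Iio]
  rw [setLIntegral_congr_fun (g := fun _ => 0) measurableSet_Iio]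
  · simp
  · intro x hx
    simp [fgamma, not_le.mpr (Set.mem_Iio.mp hx)]

lemma pushforward_mix (m : ℝ) [IsProbabilityMeasure (muN m)] (M : ℕ) (s : ℝ) (hs : 0 < s) :
    Measure.map (fun x => min (M : ℝ) (Real.logb 2 (1 + x * s))) (muN m)
      = (muN m {x : ℝ | x ≤ ((2:ℝ) ^ M - 1) / s}) • nuA m M s
        + (muN m {x : ℝ | ((2:ℝ) ^ M - 1) / s < x}) • Measure.dirac (M : ℝ) := by
  set c := ((2:ℝ) ^ M - 1) / s with hc
  have hSm : MeasurableSet {x : ℝ | x ≤ c} := measurableSet_Iic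
  have hcompl : {x : ℝ | x ≤ c}ᶜ = {x : ℝ | c < x} := by ext; simp
  have hg : Measurable fun x : ℝ => Real.logb 2 (1 + x * s) := by
    unfold Real.logb; fun_prop
  have hmin : Measurable fun x : ℝ => min (M : ℝ) (Real.logb 2 (1 + x * s)) := by
    exact measurable_const.min hg
  have hM1 : (M : ℝ) = Real.logb 2 ((2:ℝ) ^ M) := by
    rw [← Real.rpow_natCast, Real.logb_rpow (by norm_num) (by norm_num)]
  conv_lhs => rw [← Measure.restrict_add_restrict_compl (μ := muN m) hSm]
  rw [Measure.map_add _ _ hmin, hcompl]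
  congr 1
  · have h1 : Measure.map (fun x => min (M : ℝ) (Real.logb 2 (1 + x * s)))
        ((muN m).restrict {x : ℝ | x ≤ c})
        = Measure.map (fun x => Real.logb 2 (1 + x * s)) ((muN m).restrict {x : ℝ | x ≤ c}) := by
      apply Measure.map_congr
      filter_upwards [ae_restrict_mem hSm, ae_restrict_of_ae (muN_nonneg m)] with x hx hx0
      apply min_eq_right
      rw [hM1]
      have h2 : x * s ≤ 2 ^ M - 1 := (le_div_iff₀ hs).mp hx
      exact Real.logb_le_logb_of_le (by norm_num) (by positivity) (by linarith)
    rw [h1, nuA, ← Measure.map_smul, ← hc]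
    congr 1
    rw [ProbabilityTheory.cond, smul_smul]
    by_cases h0 : muN m {x : ℝ | x ≤ c} = 0
    · rw [Measure.restrict_eq_zero.mpr h0]; simp
    · rw [ENNReal.mul_inv_cancel h0 (measure_ne_top _ _), one_smul]
  · have h1 : Measure.map (fun x => min (M : ℝ) (Real.logb 2 (1 + x * s)))
        ((muN m).restrict {x : ℝ | c < x})
        = Measure.map (fun _ => (M : ℝ)) ((muN m).restrict {x : ℝ | c < x}) := by
      apply Measure.map_congr
      filter_upwards [ae_restrict_mem (measurableSet_Ioi : MeasurableSet {x : ℝ | c < x})]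
        with x hx
      apply min_eq_left
      rw [hM1]
      have h2 : 2 ^ M - 1 < x * s := (div_lt_iff₀ hs).mp hx
      exact Real.logb_le_logb_of_le (by norm_num) (by positivity) (by linarith)
    rw [h1, Measure.map_const]
    simp

lemma nuA_nonneg (m : ℝ) (M : ℕ) (s : ℝ) (hs : 0 < s) : ∀ᵐ x ∂(nuA m M s), 0 ≤ x := by
  have hg : Measurable fun x : ℝ => Real.logb 2 (1 + x * s) := by
    unfold Real.logb; fun_prop
  rw [nuA, ae_map_iff hg.aemeasurable measurableSet_Ici]
  have := cond_absolutelyContinuous (μ := muN m) (s := {x : ℝ | x ≤ ((2:ℝ) ^ M - 1) / s})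
  filter_upwards [this.ae_le (muN_nonneg m)] with x hx
  apply Real.logb_nonneg (by norm_num)
  nlinarith

lemma sumCdf_eq_zero (ν : Measure ℝ) [IsFiniteMeasure ν] (h : ∀ᵐ x ∂ν, 0 ≤ x) (n : ℕ) (x : ℝ)
    (hx : x ≤ 0) : sumCdf ν n x = 0 := by
  have h1 : ∀ᵐ a ∂(Measure.pi fun _ : Fin n => ν), ∀ k, 0 ≤ a k := by
    rw [ae_all_iff]
    intro k
    exact (Measure.quasiMeasurePreserving_eval (μ := fun _ : Fin n => ν) k).ae h
  have h2 : ∀ᵐ a ∂(Measure.pi fun _ : Fin n => ν), ¬ (∑ k, a k < x) := by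
    filter_upwards [h1] with a ha
    have := Finset.sum_nonneg fun k (_ : k ∈ Finset.univ) => ha k
    linarith
  rw [ae_iff] at h2
  simpa [sumCdf] using h2

/-- exact binomial/conditional decomposition of the lower bound to the
outage probability. -/
theorem stmt_5 (m : ℝ) (hm : 0 < m) (B M : ℕ) (hB : 0 < B) (hM : 0 < M)
    (s : ℝ) (hs : 0 < s) (R : ℝ) (hR0 : 0 < R) (hRM : R ≤ (M : ℝ))
    (p : ℝ) (hp : p = ((muN m) {x : ℝ | ((2:ℝ) ^ M - 1) / s < x}).toReal) :
    ((Measure.pi fun _ : Fin B => muN m)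
        {γ : Fin B → ℝ | ∑ b, min (M : ℝ) (Real.logb 2 (1 + γ b * s)) < (B : ℝ) * R}).toReal
      = ∑ t ∈ Finset.range (⌈(B : ℝ) * R / (M : ℝ)⌉.toNat),
          (B.choose t : ℝ) * p ^ t * (1 - p) ^ (B - t) *
            ((Measure.pi fun _ : Fin (B - t) => nuA m M s)
              {a : Fin (B - t) → ℝ | ∑ k, a k < (B : ℝ) * R - (t : ℝ) * (M : ℝ)}).toReal := by

  have hprob : IsProbabilityMeasure (muN m) := by
    rw [muN_eq]; exact isProbabilityMeasure_gammaMeasure hm hm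
  have hfin : IsFiniteMeasure (nuA m M s) := by
    unfold nuA; infer_instance
  set c := ((2:ℝ) ^ M - 1) / s with hc
  set P := muN m {x : ℝ | c < x} with hP
  set Q := muN m {x : ℝ | x ≤ c} with hQ
  have hg : Measurable fun x : ℝ => Real.logb 2 (1 + x * s) := by
    unfold Real.logb; fun_prop
  have hmin : Measurable fun x : ℝ => min (M : ℝ) (Real.logb 2 (1 + x * s)) :=
    measurable_const.min hg
  have hmix := pushforward_mix m M s hs
  rw [← hc, ← hP, ← hQ] at hmix
  have hκ : IsFiniteMeasure (Q • nuA m M s + P • Measure.dirac (M : ℝ)) := by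
    rw [← hmix]; infer_instance
  have hq : 1 - p = Q.toReal := by
    have : {x : ℝ | x ≤ c} = {x : ℝ | c < x}ᶜ := by ext; simp
    rw [hp, hQ, this]
    exact (probReal_compl_eq_one_sub (μ := muN m) measurableSet_Ioi).symm
  have hpi : (Measure.pi fun _ : Fin B => muN m)
        {γ : Fin B → ℝ | ∑ b, min (M : ℝ) (Real.logb 2 (1 + γ b * s)) < (B : ℝ) * R}
      = sumCdf (Q • nuA m M s + P • Measure.dirac (M : ℝ)) B (B * R) := by
    rw [← hmix, sumCdf]
    have h := measurePreserving_pi (fun _ : Fin B => muN m)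
      (fun _ => Measure.map (fun x => min (M : ℝ) (Real.logb 2 (1 + x * s))) (muN m))
      (f := fun _ x => min (M : ℝ) (Real.logb 2 (1 + x * s)))
      (fun _ => hmin.measurePreserving _)
    have hS : MeasurableSet {a : Fin B → ℝ | ∑ k, a k < B * R} :=
      measurableSet_lt (by fun_prop) (by fun_prop)
    exact h.measure_preimage hS.nullMeasurableSet
  have hfin' : ∀ n x, sumCdf (nuA m M s) n x ≠ ⊤ := fun n x => measure_ne_top _ _
  have hMpos : (0:ℝ) < M := by exact_mod_cast hM
  rw [hpi, sumCdf_mix, Finset.Nat.sum_antidiagonal_eq_sum_range_succ_mk, ENNReal.toReal_sum]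
  · have hle : ⌈(B : ℝ) * R / (M : ℝ)⌉.toNat ≤ B + 1 := by
      have : ⌈(B : ℝ) * R / (M : ℝ)⌉ ≤ (B : ℤ) := by
        rw [Int.ceil_le, div_le_iff₀ hMpos]
        push_cast
        gcongr
      omega
    rw [← Finset.sum_subset (Finset.range_subset_range.mpr hle)]
    · refine Finset.sum_congr rfl fun t _ => ?_
      rw [hq, hp]
      simp only [nsmul_eq_mul, ENNReal.toReal_mul, ENNReal.toReal_pow, ENNReal.toReal_natCast]
      rw [sumCdf]
      ring
    · intro t _ ht
      rw [sumCdf_eq_zero _ (nuA_nonneg m M s hs)]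
      · simp
      · rw [Finset.mem_range, not_lt, Int.toNat_le, Int.ceil_le, div_le_iff₀ hMpos] at ht
        push_cast at ht
        simpa using ht
  · intro t _
    simp only [nsmul_eq_mul]
    have hPt : P ≠ ⊤ := measure_ne_top _ _
    have hQt : Q ≠ ⊤ := measure_ne_top _ _
    exact ENNReal.mul_ne_top (ENNReal.natCast_ne_top _) (ENNReal.mul_ne_top
      (ENNReal.mul_ne_top (ENNReal.pow_ne_top hPt) (ENNReal.pow_ne_top hQt)) (hfin' _ _))
end

section
/- Let m > 0, let B and M be positive integers, and let 0 < R < M. Let d = d_B(R) = 1 + ⌊B(1 − R/M)⌋, and let Ā_1, …, Ā_d be i.i.d. random variables with density f_Ā(ξ) = m (2^ξ − 1)^{m−1} 2^ξ ln 2 / (2^M − 1)^m on [0, M]. Define K_ℓ = Pr( Σ_{k=1}^{d} Ā_k < B R − (B − d) M ) · C(B, B − d) · (m (2^M − 1))^{m d} / (m Γ(m))^{d}. Then, with γ_1, …, γ_B i.i.d. with law μ_m and P^ℓ_out(s, R) = Pr( (1/B) Σ_{b=1}^B min(M, log₂(1 + γ_b s)) < R ), one has lim_{s → ∞} s^{m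 d} · P^ℓ_out(s, R) = K_ℓ. -/
open MeasureTheory ProbabilityTheory Real Filter

/-- The limiting density f_Ā. -/
noncomputable def fAbar (m : ℝ) (M : ℕ) (ξ : ℝ) : ℝ :=
  if 0 ≤ ξ ∧ ξ ≤ (M : ℝ) then
    m * ((2:ℝ) ^ ξ - 1) ^ (m - 1) * (2:ℝ) ^ ξ * Real.log 2 / ((2:ℝ) ^ M - 1) ^ m
  else 0

/-- The law of the limiting random variable Ā. -/
noncomputable def nuAbar (m : ℝ) (M : ℕ) : Measure ℝ :=
  MeasureTheory.volume.withDensity fun ξ => ENNReal.ofReal (fAbar m M ξ)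

/-- The lower bound to the outage probability. -/
noncomputable def PoutL (m : ℝ) (B M : ℕ) (s R : ℝ) : ℝ :=
  ((Measure.pi fun _ : Fin B => muN m)
    {γ : Fin B → ℝ |
      (1 / (B : ℝ)) * ∑ b, min (M : ℝ) (Real.logb 2 (1 + γ b * s)) < R}).toReal

lemma measurable_fgamma (m : ℝ) : Measurable (fgamma m) := by
  unfold fgamma
  exact Measurable.ite measurableSet_Ici (by fun_prop) measurable_const

lemma measurable_fAbar (m : ℝ) (M : ℕ) : Measurable (fAbar m M) := by
  unfold fAbar
  refine Measurable.ite (measurableSet_Icc (a := (0:ℝ)) (b := (M:ℝ))) ?_ measurable_const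
  have : Measurable (fun ξ : ℝ => (2:ℝ) ^ ξ) := by fun_prop
  fun_prop

lemma muN_prob (m : ℝ) (hm : 0 < m) : IsProbabilityMeasure (muN m) := by
  have h : muN m = gammaMeasure m m := by
    unfold muN gammaMeasure
    congr 1
    funext x
    unfold gammaPDF gammaPDFReal fgamma
    congr 1
    split_ifs
    · ring
    · rfl
  rw [h]
  exact isProbabilityMeasure_gammaMeasure hm hm

/-- Scaled law of `log₂(1+γ s)` on `{γ ≤ c/s}`. -/
noncomputable def nuS (m : ℝ) (M : ℕ) (s : ℝ) : Measure ℝ :=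
  Measure.map (fun x => Real.logb 2 (1 + x * s))
    ((muN m).restrict (Set.Iic (((2:ℝ) ^ M - 1) / s)))

lemma measurable_A (s : ℝ) : Measurable (fun x : ℝ => Real.logb 2 (1 + x * s)) := by
  unfold Real.logb
  fun_prop

lemma c_pos (M : ℕ) (hM : 0 < M) : 0 < (2:ℝ) ^ M - 1 := by
  have : (1:ℝ) < 2 ^ M := one_lt_pow₀ (by norm_num) hM.ne'
  linarith

lemma image_eq (M : ℕ) (s : ℝ) (hs : 0 < s) (E : Set ℝ) :
    (fun ξ : ℝ => ((2:ℝ) ^ ξ - 1) / s) '' (Set.Icc 0 (M:ℝ) ∩ E)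
      = Set.Icc 0 (((2:ℝ) ^ M - 1) / s) ∩ (fun x => Real.logb 2 (1 + x * s)) ⁻¹' E := by
  ext x
  simp only [Set.mem_image, Set.mem_inter_iff, Set.mem_Icc, Set.mem_preimage]
  constructor
  · rintro ⟨ξ, ⟨⟨h0, h1⟩, hE⟩, rfl⟩
    have e1 : (1:ℝ) ≤ 2 ^ ξ := Real.one_le_rpow (by norm_num) h0
    have e2 : (2:ℝ) ^ ξ ≤ 2 ^ M := by
      rw [← Real.rpow_natCast]
      exact Real.rpow_le_rpow_of_exponent_le (by norm_num) h1
    refine ⟨⟨div_nonneg (by linarith) hs.le, by gcongr⟩, ?_⟩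
    rw [div_mul_cancel₀ _ hs.ne', add_sub_cancel, Real.logb_rpow (by norm_num) (by norm_num)]
    exact hE
  · rintro ⟨⟨h0, h1⟩, hE⟩
    have h2 : x * s ≤ 2 ^ M - 1 := (le_div_iff₀ hs).1 h1
    have h3 : 0 ≤ x * s := by positivity
    refine ⟨Real.logb 2 (1 + x * s), ⟨⟨Real.logb_nonneg (by norm_num) (by linarith), ?_⟩, hE⟩, ?_⟩
    · rw [Real.logb_le_iff_le_rpow (by norm_num) (by linarith), Real.rpow_natCast]
      linarith
    · rw [Real.rpow_logb (by norm_num) (by norm_num) (by linarith)]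
      field_simp
      ring

lemma density_eq (m : ℝ) (hm : 0 < m) (M : ℕ) (hM : 0 < M) (s : ℝ) (hs : 0 < s) (ξ : ℝ)
    (h0 : 0 ≤ ξ) (h1 : ξ ≤ M) :
    |(2:ℝ) ^ ξ * Real.log 2 / s| * fgamma m (((2:ℝ) ^ ξ - 1) / s)
     = Real.exp (-(m * (((2:ℝ) ^ ξ - 1) / s))) *
      ((s ^ m)⁻¹ * ((m * ((2:ℝ) ^ M - 1)) ^ m / (m * Real.Gamma m)) * fAbar m M ξ) := by
  have hc := c_pos M hM
  have e1 : (1:ℝ) ≤ 2 ^ ξ := Real.one_le_rpow (by norm_num) h0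
  have hl : 0 < Real.log 2 := Real.log_pos (by norm_num)
  have hx : 0 ≤ ((2:ℝ) ^ ξ - 1) / s := div_nonneg (by linarith) hs.le
  rw [abs_of_nonneg (by positivity)]
  unfold fgamma fAbar
  rw [if_pos hx, if_pos ⟨h0, h1⟩, Real.div_rpow (by linarith) hs.le, Real.mul_rpow hm.le hc.le,
    Real.rpow_sub_one hs.ne']
  have := Real.Gamma_pos_of_pos hm
  have := Real.rpow_pos_of_pos hs m
  have := Real.rpow_pos_of_pos hc m
  field_simp

lemma nuS_apply (m : ℝ) (hm : 0 < m) (M : ℕ) (hM : 0 < M) (s : ℝ) (hs : 0 < s) (E : Set ℝ)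
    (hE : MeasurableSet E) :
    nuS m M s E = ∫⁻ ξ in Set.Icc 0 (M:ℝ) ∩ E,
      ENNReal.ofReal (Real.exp (-(m * (((2:ℝ) ^ ξ - 1) / s))) *
      ((s ^ m)⁻¹ * ((m * ((2:ℝ) ^ M - 1)) ^ m / (m * Real.Gamma m)) * fAbar m M ξ)) := by
  have hpre := measurable_A s hE
  unfold nuS
  rw [Measure.map_apply (measurable_A s) hE, Measure.restrict_apply hpre]
  unfold muN
  rw [withDensity_apply _ (hpre.inter measurableSet_Iic)]
  have e : ∫⁻ x in (fun x => Real.logb 2 (1 + x * s)) ⁻¹' E ∩ Set.Iic (((2:ℝ) ^ M - 1) / s),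
      ENNReal.ofReal (fgamma m x) =
      ∫⁻ x in (fun ξ : ℝ => ((2:ℝ) ^ ξ - 1) / s) '' (Set.Icc 0 (M:ℝ) ∩ E),
        ENNReal.ofReal (fgamma m x) := by
    rw [image_eq M s hs E, ← lintegral_indicator (hpre.inter measurableSet_Iic),
      ← lintegral_indicator (measurableSet_Icc.inter hpre)]
    congr 1
    funext x
    by_cases hx : 0 ≤ x
    · have : x ∈ (fun x => Real.logb 2 (1 + x * s)) ⁻¹' E ∩ Set.Iic (((2:ℝ) ^ M - 1) / s) ↔
         x ∈ Set.Icc 0 (((2:ℝ) ^ M - 1) / s) ∩ (fun x => Real.logb 2 (1 + x * s)) ⁻¹' E := by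
        simp only [Set.mem_inter_iff, Set.mem_Iic, Set.mem_Icc, hx, true_and]
        tauto
      simp only [Set.indicator]
      split_ifs <;> tauto
    · have : fgamma m x = 0 := by unfold fgamma; rw [if_neg hx]
      simp [Set.indicator, this]
  rw [e, lintegral_image_eq_lintegral_abs_deriv_mul (f' := fun ξ => (2:ℝ) ^ ξ * Real.log 2 / s)
    (measurableSet_Icc.inter hE)]
  · refine setLIntegral_congr_fun (measurableSet_Icc.inter hE) ?_
    rintro ξ ⟨⟨h0, h1⟩, -⟩
    beta_reduce
    rw [← ENNReal.ofReal_mul (abs_nonneg _), density_eq m hm M hM s hs ξ h0 h1]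
  · intro ξ _
    have h := ((Real.hasStrictDerivAt_const_rpow (a := 2) (by norm_num) ξ).hasDerivAt.sub_const 1).div_const s
    exact h.hasDerivWithinAt
  · intro a _ b _ hab
    have hab' : ((2:ℝ) ^ a - 1) / s = ((2:ℝ) ^ b - 1) / s := hab
    have h2 : (2:ℝ) ^ a = 2 ^ b := by
      field_simp at hab'
      linarith
    exact (Real.strictMono_rpow_of_base_gt_one (b := 2) (by norm_num)).injective h2

lemma fAbar_nonneg (m : ℝ) (hm : 0 < m) (M : ℕ) (hM : 0 < M) (ξ : ℝ) : 0 ≤ fAbar m M ξ := by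
  unfold fAbar
  split_ifs with h
  · have hc := c_pos M hM
    have e1 : (1:ℝ) ≤ 2 ^ ξ := Real.one_le_rpow (by norm_num) h.1
    have hl : 0 < Real.log 2 := Real.log_pos (by norm_num)
    have : 0 ≤ ((2:ℝ) ^ ξ - 1) ^ (m - 1) := Real.rpow_nonneg (by linarith) _
    positivity
  · exact le_rfl

lemma nuAbar_apply (m : ℝ) (M : ℕ) (E : Set ℝ) (hE : MeasurableSet E) :
    nuAbar m M E = ∫⁻ ξ in Set.Icc 0 (M:ℝ) ∩ E, ENNReal.ofReal (fAbar m M ξ) := by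
  unfold nuAbar
  rw [withDensity_apply _ hE, ← lintegral_indicator hE,
    ← lintegral_indicator (measurableSet_Icc.inter hE)]
  congr 1
  funext x
  by_cases hx : x ∈ Set.Icc 0 (M:ℝ)
  · have : x ∈ E ↔ x ∈ Set.Icc 0 (M:ℝ) ∩ E := by simp only [Set.mem_inter_iff, hx, true_and]
    simp only [Set.indicator]
    split_ifs <;> tauto
  · have : fAbar m M x = 0 := by unfold fAbar; exact if_neg hx
    simp [Set.indicator, this]

/-- The constant `C`. -/
noncomputable def cst (m : ℝ) (M : ℕ) : ℝ := (m * ((2:ℝ) ^ M - 1)) ^ m / (m * Real.Gamma m)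

lemma cst_pos (m : ℝ) (hm : 0 < m) (M : ℕ) (hM : 0 < M) : 0 < cst m M := by
  have := Real.Gamma_pos_of_pos hm
  have := c_pos M hM
  unfold cst
  positivity

lemma nuS_le (m : ℝ) (hm : 0 < m) (M : ℕ) (hM : 0 < M) (s : ℝ) (hs : 0 < s) :
    nuS m M s ≤ ((s ^ m)⁻¹ * cst m M).toNNReal • nuAbar m M := by
  have hC := cst_pos m hm M hM
  refine Measure.le_iff.2 fun E hE => ?_
  rw [Measure.smul_apply, nuS_apply m hm M hM s hs E hE, nuAbar_apply m M E hE,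
    ENNReal.smul_def, smul_eq_mul, ← lintegral_const_mul' _ _ ENNReal.coe_ne_top]
  refine setLIntegral_mono' (measurableSet_Icc.inter hE) ?_
  rintro ξ ⟨⟨h0, h1⟩, -⟩
  have hf := fAbar_nonneg m hm M hM ξ
  have e1 : (1:ℝ) ≤ 2 ^ ξ := Real.one_le_rpow (by norm_num) h0
  change _ ≤ ENNReal.ofReal _ * _
  rw [← ENNReal.ofReal_mul (by positivity)]
  apply ENNReal.ofReal_le_ofReal
  refine mul_le_of_le_one_left (by change 0 ≤ (s ^ m)⁻¹ * cst m M * _; positivity) ?_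
  rw [Real.exp_le_one_iff, neg_nonpos]
  exact mul_nonneg hm.le (div_nonneg (by linarith) hs.le)

lemma le_nuS (m : ℝ) (hm : 0 < m) (M : ℕ) (hM : 0 < M) (s : ℝ) (hs : 0 < s) :
    (Real.exp (-(m * (((2:ℝ) ^ M - 1) / s))) * ((s ^ m)⁻¹ * cst m M)).toNNReal • nuAbar m M
      ≤ nuS m M s := by
  have hC := cst_pos m hm M hM
  refine Measure.le_iff.2 fun E hE => ?_
  rw [Measure.smul_apply, nuS_apply m hm M hM s hs E hE, nuAbar_apply m M E hE,
    ENNReal.smul_def, smul_eq_mul, ← lintegral_const_mul' _ _ ENNReal.coe_ne_top]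
  refine setLIntegral_mono' (measurableSet_Icc.inter hE) ?_
  rintro ξ ⟨⟨h0, h1⟩, -⟩
  have hf := fAbar_nonneg m hm M hM ξ
  have e2 : (2:ℝ) ^ ξ ≤ 2 ^ M := by
    rw [← Real.rpow_natCast]
    exact Real.rpow_le_rpow_of_exponent_le (by norm_num) h1
  change ENNReal.ofReal _ * _ ≤ _
  rw [← ENNReal.ofReal_mul (by positivity)]
  apply ENNReal.ofReal_le_ofReal
  rw [mul_assoc]
  refine mul_le_mul_of_nonneg_right ?_ (by change 0 ≤ (s ^ m)⁻¹ * cst m M * _; positivity)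
  gcongr

lemma nuS_finite (m : ℝ) (hm : 0 < m) (M : ℕ) (s : ℝ) : IsFiniteMeasure (nuS m M s) := by
  have := muN_prob m hm
  unfold nuS
  infer_instance

lemma nuAbar_finite (m : ℝ) (hm : 0 < m) (M : ℕ) (hM : 0 < M) : IsFiniteMeasure (nuAbar m M) := by
  have hC := cst_pos m hm M hM
  have := nuS_finite m hm M 1
  have h := le_nuS m hm M hM 1 one_pos Set.univ
  constructor
  rw [Measure.smul_apply, ENNReal.smul_def, smul_eq_mul] at h
  have h2 := h.trans_lt (measure_lt_top (nuS m M 1) Set.univ)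
  refine ENNReal.lt_top_of_mul_ne_top_right h2.ne ?_
  change ENNReal.ofReal _ ≠ 0
  rw [ne_eq, ENNReal.ofReal_eq_zero, not_le]
  positivity

lemma nuAbar_neg (m : ℝ) (M : ℕ) : ∀ᵐ x ∂(nuAbar m M), 0 ≤ x := by
  have : nuAbar m M (Set.Iio 0) = 0 := by
    rw [nuAbar_apply _ _ _ measurableSet_Iio]
    have : Set.Icc 0 (M:ℝ) ∩ Set.Iio 0 = ∅ := by
      ext x; simp only [Set.mem_inter_iff, Set.mem_Icc, Set.mem_Iio, Set.mem_empty_iff_false]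
      constructor
      · rintro ⟨⟨h, _⟩, h'⟩; linarith
      · simp
    simp [this]
  rw [ae_iff]
  convert this using 2
  ext x; simp

lemma pi_mono' {ι : Type*} [Fintype ι] (μ ν : Measure ℝ) [IsFiniteMeasure μ]
    (h : μ ≤ ν) :
    (Measure.pi fun _ : ι => μ) ≤ Measure.pi fun _ : ι => ν := by
  have h1 : (Measure.pi fun _ : ι => μ).toOuterMeasure ≤
      OuterMeasure.pi (fun _ : ι => ν.toOuterMeasure) := by
    rw [OuterMeasure.le_pi]
    intro s _
    change (Measure.pi fun _ : ι => μ) _ ≤ _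
    rw [Measure.pi_pi]
    exact Finset.prod_le_prod' fun i _ => h (s i)
  refine Measure.le_iff.2 fun E hE => ?_
  rw [Measure.pi, Measure.pi, toMeasure_apply _ _ hE, toMeasure_apply _ _ hE]
  have h2 := h1 E
  rwa [Measure.pi, Measure.coe_toOuterMeasure, toMeasure_apply _ _ hE] at h2

lemma pi_smul' {ι : Type*} [Fintype ι] (c : NNReal) (μ : Measure ℝ) [IsFiniteMeasure μ] :
    (Measure.pi fun _ : ι => c • μ) = c ^ (Fintype.card ι) • Measure.pi fun _ : ι => μ := by
  apply Measure.pi_eq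
  intro s _
  rw [Measure.smul_apply, Measure.pi_pi]
  simp only [Measure.smul_apply, ENNReal.smul_def, smul_eq_mul, Finset.prod_mul_distrib,
    Finset.prod_const, Finset.card_univ, ENNReal.coe_pow]

lemma measurableSet_G {ι : Type*} [Fintype ι] (t : ℝ) :
    MeasurableSet {a : ι → ℝ | ∑ k, a k < t} :=
  measurableSet_lt (by fun_prop) measurable_const

lemma pi_limit {ι : Type*} [Fintype ι] (m : ℝ) (hm : 0 < m) (M : ℕ) (hM : 0 < M) (t : ℝ) :
    Tendsto (fun s : ℝ => s ^ (m * (Fintype.card ι : ℝ)) *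
      (Measure.pi fun _ : ι => nuS m M s).real {a : ι → ℝ | ∑ k, a k < t}) atTop
      (nhds (cst m M ^ (Fintype.card ι) *
        (Measure.pi fun _ : ι => nuAbar m M).real {a : ι → ℝ | ∑ k, a k < t})) := by
  have hC := cst_pos m hm M hM
  have := nuAbar_finite m hm M hM
  set n := Fintype.card ι with hn
  set G := {a : ι → ℝ | ∑ k, a k < t} with hG
  set Q := (Measure.pi fun _ : ι => nuAbar m M).real G with hQ
  have hlow : Tendsto (fun s : ℝ => (Real.exp (-(m * (((2:ℝ) ^ M - 1) / s)))) ^ n *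
      (cst m M ^ n * Q)) atTop (nhds (cst m M ^ n * Q)) := by
    have h1 : Tendsto (fun s : ℝ => ((2:ℝ) ^ M - 1) / s) atTop (nhds 0) :=
      tendsto_const_nhds.div_atTop tendsto_id
    have h2 : Tendsto (fun s : ℝ => Real.exp (-(m * (((2:ℝ) ^ M - 1) / s)))) atTop (nhds 1) := by
      have := (Real.continuous_exp.tendsto _).comp (h1.const_mul m).neg
      simpa [Function.comp_def] using this
    simpa using (h2.pow n).mul_const (cst m M ^ n * Q)
  refine tendsto_of_tendsto_of_tendsto_of_le_of_le' hlow tendsto_const_nhds ?_ ?_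
  · filter_upwards [eventually_gt_atTop 0] with s hs
    have := nuS_finite m hm M s
    have h := pi_mono' (ι := ι) _ _ (le_nuS m hm M hM s hs)
    rw [pi_smul'] at h
    have h2 := ENNReal.toReal_mono (measure_ne_top _ G) (h G)
    have hs' := Real.rpow_pos_of_pos hs m
    rw [Measure.smul_apply, ENNReal.smul_def, smul_eq_mul, ENNReal.toReal_mul,
      ENNReal.coe_toReal, NNReal.coe_pow, Real.coe_toNNReal _ (by positivity)] at h2
    calc _ = (s ^ m) ^ n * ((Real.exp (-(m * (((2:ℝ) ^ M - 1) / s))) * ((s ^ m)⁻¹ * cst m M)) ^ n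
            * Q) := by
          rw [mul_pow, mul_pow, inv_pow]; field_simp
      _ ≤ _ := by
          rw [Real.rpow_mul_natCast hs.le]
          exact mul_le_mul_of_nonneg_left h2 (by positivity)
  · filter_upwards [eventually_gt_atTop 0] with s hs
    have := nuS_finite m hm M s
    have h := pi_mono' (ι := ι) _ _ (nuS_le m hm M hM s hs)
    rw [pi_smul'] at h
    have h2 := ENNReal.toReal_mono (measure_ne_top _ G) (h G)
    have hs' := Real.rpow_pos_of_pos hs m
    rw [Measure.smul_apply, ENNReal.smul_def, smul_eq_mul, ENNReal.toReal_mul,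
      ENNReal.coe_toReal, NNReal.coe_pow, Real.coe_toNNReal _ (by positivity)] at h2
    calc _ ≤ (s ^ m) ^ n * (((s ^ m)⁻¹ * cst m M) ^ n * Q) := by
          rw [Real.rpow_mul_natCast hs.le]
          exact mul_le_mul_of_nonneg_left h2 (by positivity)
      _ = _ := by
          rw [mul_pow, inv_pow]; field_simp

lemma pi_zero {ι : Type*} [Fintype ι] (m : ℝ) (hm : 0 < m) (M : ℕ) (hM : 0 < M) (t : ℝ)
    (ht : t ≤ 0) (s : ℝ) (hs : 0 < s) :
    (Measure.pi fun _ : ι => nuS m M s).real {a : ι → ℝ | ∑ k, a k < t} = 0 := by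
  have := nuAbar_finite m hm M hM
  have := nuS_finite m hm M s
  have h := pi_mono' (ι := ι) _ _ (nuS_le m hm M hM s hs)
  rw [pi_smul'] at h
  have h0 : (Measure.pi fun _ : ι => nuAbar m M) {a : ι → ℝ | ∑ k, a k < t} = 0 := by
    have h1 : ∀ᵐ a ∂(Measure.pi fun _ : ι => nuAbar m M), ∀ i, 0 ≤ a i :=
      eventually_all.2 fun i => Measure.tendsto_eval_ae_ae.eventually (nuAbar_neg m M)
    have h2 : ∀ᵐ a ∂(Measure.pi fun _ : ι => nuAbar m M), ¬ (∑ k, a k < t) := by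
      filter_upwards [h1] with a ha
      have := Finset.sum_nonneg (s := Finset.univ) (fun i _ => ha i)
      linarith
    simpa [ae_iff] using h2
  have h3 := h {a : ι → ℝ | ∑ k, a k < t}
  rw [Measure.smul_apply, h0, smul_zero] at h3
  rw [Measure.real, nonpos_iff_eq_zero.1 h3, ENNReal.toReal_zero]

lemma q_limit (m : ℝ) (hm : 0 < m) (M : ℕ) (hM : 0 < M) :
    Tendsto (fun s : ℝ => (muN m).real (Set.Ioi (((2:ℝ) ^ M - 1) / s))) atTop (nhds 1) := by
  have := muN_prob m hm
  have := nuAbar_finite m hm M hM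
  have hC := cst_pos m hm M hM
  have key : Tendsto (fun s : ℝ => (muN m).real (Set.Iic (((2:ℝ) ^ M - 1) / s))) atTop
      (nhds 0) := by
    have hup : Tendsto (fun s : ℝ => (s ^ m)⁻¹ * cst m M * (nuAbar m M).real Set.univ) atTop
        (nhds 0) := by
      have := (((tendsto_rpow_atTop hm).inv_tendsto_atTop).mul_const (cst m M)).mul_const
        ((nuAbar m M).real Set.univ)
      simpa using this
    refine squeeze_zero' (Eventually.of_forall fun _ => measureReal_nonneg) ?_ hup
    filter_upwards [eventually_gt_atTop 0] with s hs
    have hs' := Real.rpow_pos_of_pos hs m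
    have h := nuS_le m hm M hM s hs Set.univ
    have h2 := ENNReal.toReal_mono (by finiteness) h
    rw [Measure.smul_apply, ENNReal.smul_def, smul_eq_mul, ENNReal.toReal_mul,
      ENNReal.coe_toReal, Real.coe_toNNReal _ (by positivity)] at h2
    unfold nuS at h2
    rwa [Measure.map_apply (measurable_A s) MeasurableSet.univ, Set.preimage_univ,
      Measure.restrict_apply_univ] at h2
  have e : (fun s : ℝ => (muN m).real (Set.Ioi (((2:ℝ) ^ M - 1) / s))) =
      fun s : ℝ => 1 - (muN m).real (Set.Iic (((2:ℝ) ^ M - 1) / s)) := by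
    funext s
    rw [← Set.compl_Iic, probReal_compl_eq_one_sub measurableSet_Iic]
  rw [e]
  simpa using key.const_sub 1

lemma nuS_eq_min (m : ℝ) (M : ℕ) (s : ℝ) (hs : 0 < s) :
    Measure.map (fun x => min (M:ℝ) (Real.logb 2 (1 + x * s)))
    ((muN m).restrict (Set.Iic (((2:ℝ) ^ M - 1) / s))) = nuS m M s := by
  unfold nuS
  apply Measure.map_congr
  have h0 : ∀ᵐ x ∂(muN m), 0 ≤ x := by
    have : muN m (Set.Iio 0) = 0 := by
      unfold muN
      rw [withDensity_apply _ measurableSet_Iio,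
        setLIntegral_congr_fun (g := fun _ => 0) measurableSet_Iio, lintegral_zero]
      intro x hx
      have hx' : ¬ (0 ≤ x) := not_le.2 hx
      simp [fgamma, hx']
    rw [ae_iff]
    convert this using 2
    ext x; simp
  filter_upwards [ae_restrict_of_ae h0, ae_restrict_mem measurableSet_Iic] with x hx hx2
  apply min_eq_right
  have h2 : x * s ≤ 2 ^ M - 1 := (le_div_iff₀ hs).1 hx2
  have h3 : 0 ≤ x * s := by positivity
  rw [Real.logb_le_iff_le_rpow (by norm_num) (by linarith), Real.rpow_natCast]
  linarith

lemma min_eq_M (M : ℕ) (s : ℝ) (hs : 0 < s) (x : ℝ) (hx : ¬ x ≤ ((2:ℝ) ^ M - 1) / s) :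
    min (M:ℝ) (Real.logb 2 (1 + x * s)) = M := by
  apply min_eq_left
  have h2 : 2 ^ M - 1 < x * s := (div_lt_iff₀ hs).1 (not_le.1 hx)
  have : (0:ℝ) < 2 ^ M := by positivity
  rw [Real.le_logb_iff_rpow_le (by norm_num) (by linarith), Real.rpow_natCast]
  linarith

lemma F_measure {ι : Type*} [Fintype ι] (m : ℝ) (hm : 0 < m) (M : ℕ) (s : ℝ) (hs : 0 < s)
    (t : ℝ) :
    (Measure.pi fun _ : ι => muN m)
      {x : ι → ℝ | (∀ i, x i ≤ ((2:ℝ) ^ M - 1) / s) ∧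
        ∑ i, min (M:ℝ) (Real.logb 2 (1 + x i * s)) < t} =
    (Measure.pi fun _ : ι => nuS m M s) {a : ι → ℝ | ∑ k, a k < t} := by
  have := muN_prob m hm
  have := nuS_finite m hm M s
  have hA : Measurable (fun x : ℝ => min (M:ℝ) (Real.logb 2 (1 + x * s))) :=
    measurable_const.min (measurable_A s)
  have hA' : Measurable (fun (x : ι → ℝ) i => min (M:ℝ) (Real.logb 2 (1 + x i * s))) :=
    measurable_pi_lambda _ fun i => hA.comp (measurable_pi_apply i)
  rw [← nuS_eq_min m M s hs, ← Measure.pi_map_pi (fun _ => hA.aemeasurable),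
    Measure.map_apply hA' (measurableSet_G t), ← Measure.restrict_pi_pi,
    Measure.restrict_apply ((measurableSet_G t).preimage hA')]
  congr 1
  ext x
  simp only [Set.mem_ofPred_eq, Set.mem_inter_iff, Set.mem_preimage, Set.mem_pi, Set.mem_univ,
    forall_true_left, Set.mem_Iic]
  exact and_comm

lemma term_measure (m : ℝ) (hm : 0 < m) (B M : ℕ) (s : ℝ) (hs : 0 < s) (hB : 0 < B) (R : ℝ)
    (S : Finset (Fin B)) :
    (Measure.pi fun _ : Fin B => muN m)
      ({γ : Fin B → ℝ | (1 / (B : ℝ)) * ∑ b, min (M : ℝ) (Real.logb 2 (1 + γ b * s)) < R} ∩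
        {γ | ∀ b, γ b ≤ ((2:ℝ) ^ M - 1) / s ↔ b ∈ S}) =
    (Measure.pi fun _ : {b // b ∈ S} => nuS m M s)
      {a | ∑ k, a k < (B:ℝ) * R - ((B:ℝ) - (S.card : ℝ)) * M} *
      (muN m (Set.Ioi (((2:ℝ) ^ M - 1) / s))) ^ (B - S.card) := by
  have := muN_prob m hm
  have hB' : (0:ℝ) < B := by exact_mod_cast hB
  have hcard : Fintype.card {b // ¬ b ∈ S} = B - S.card := by
    rw [Fintype.card_subtype_compl]
    simp
  have hSB : S.card ≤ B := by simpa using S.card_le_univ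
  have mp : MeasurePreserving
      (MeasurableEquiv.piEquivPiSubtypeProd (fun _ : Fin B => ℝ) (fun b => b ∈ S))
      (Measure.pi fun _ : Fin B => muN m)
      ((Measure.pi fun _ : {b // b ∈ S} => muN m).prod
        (Measure.pi fun _ : {b // ¬ b ∈ S} => muN m)) := by
    convert measurePreserving_piEquivPiSubtypeProd (fun _ : Fin B => muN m) (fun b => b ∈ S)
  rw [← F_measure m hm M s hs]
  have hG : (muN m (Set.Ioi (((2:ℝ) ^ M - 1) / s))) ^ (B - S.card) =
      (Measure.pi fun _ : {b // ¬ b ∈ S} => muN m)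
        (Set.univ.pi fun _ => Set.Ioi (((2:ℝ) ^ M - 1) / s)) := by
    rw [Measure.pi_pi, Finset.prod_const, Finset.card_univ, hcard]
  rw [hG, ← Measure.prod_prod, ← mp.measure_preimage_equiv]
  congr 1
  ext γ
  have hsplit : ∑ b, min (M : ℝ) (Real.logb 2 (1 + γ b * s)) =
      ∑ b : {b // b ∈ S}, min (M : ℝ) (Real.logb 2 (1 + γ b * s)) +
      ∑ b : {b // ¬ b ∈ S}, min (M : ℝ) (Real.logb 2 (1 + γ b * s)) := by
    convert (Fintype.sum_subtype_add_sum_subtype (fun b => b ∈ S)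
      (fun b => min (M : ℝ) (Real.logb 2 (1 + γ b * s)))).symm
  have hprop : (1 / (B : ℝ)) * ∑ b, min (M : ℝ) (Real.logb 2 (1 + γ b * s)) < R ↔
      ∑ b, min (M : ℝ) (Real.logb 2 (1 + γ b * s)) < B * R := by
    rw [one_div, inv_mul_lt_iff₀ hB']
  have hrest : (∀ b : {b // ¬ b ∈ S}, ¬ γ b ≤ ((2:ℝ) ^ M - 1) / s) →
      ∑ b : {b // ¬ b ∈ S}, min (M : ℝ) (Real.logb 2 (1 + γ b * s)) = ((B:ℝ) - S.card) * M := by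
    intro h
    rw [Finset.sum_congr rfl fun (b : {b // ¬ b ∈ S}) _ => min_eq_M M s hs (γ b) (h b), Finset.sum_const,
      Finset.card_univ, hcard, nsmul_eq_mul, Nat.cast_sub hSB]
  change (_ ∧ _) ↔ ((_ ∧ _) ∧ _)
  simp only [Set.mem_pi, Set.mem_univ, forall_true_left, Set.mem_Ioi]
  change (_ ∧ _) ↔ (((∀ i : {b // b ∈ S}, γ i ≤ _) ∧
    ∑ i : {b // b ∈ S}, min (M : ℝ) (Real.logb 2 (1 + γ i * s)) < _) ∧
    ∀ i : {b // ¬ b ∈ S}, _ < γ i)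
  simp only [Set.mem_ofPred_eq]
  rw [hprop, hsplit]
  constructor
  · rintro ⟨h1, h2⟩
    have h3 : ∀ b : {b // ¬ b ∈ S}, ¬ γ b ≤ ((2:ℝ) ^ M - 1) / s := fun b hb => b.2 ((h2 b).1 hb)
    rw [hrest h3] at h1
    exact ⟨⟨fun i => (h2 i).2 i.2, by linarith⟩, fun i => not_le.1 (h3 i)⟩
  · rintro ⟨⟨h1, h2⟩, h3⟩
    rw [hrest fun b => not_le.2 (h3 b)]
    refine ⟨by linarith, fun b => ⟨fun hb => ?_, fun hb => h1 ⟨b, hb⟩⟩⟩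
    by_contra hbS
    exact absurd hb (not_le.2 (h3 ⟨b, hbS⟩))

lemma decomp (m : ℝ) (hm : 0 < m) (B M : ℕ) (s : ℝ) (hs : 0 < s) (hB : 0 < B) (R : ℝ) :
    PoutL m B M s R = ∑ S : Finset (Fin B),
      (Measure.pi fun _ : {b // b ∈ S} => nuS m M s).real
      {a | ∑ k, a k < (B:ℝ) * R - ((B:ℝ) - (S.card : ℝ)) * M} *
      ((muN m).real (Set.Ioi (((2:ℝ) ^ M - 1) / s))) ^ (B - S.card) := by
  have := muN_prob m hm
  have := nuS_finite m hm M s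
  unfold PoutL
  set E := {γ : Fin B → ℝ | (1 / (B : ℝ)) * ∑ b, min (M : ℝ) (Real.logb 2 (1 + γ b * s)) < R}
    with hE
  have hEm : MeasurableSet E := by
    refine measurableSet_lt ?_ measurable_const
    have hA : Measurable (fun x : ℝ => min (M:ℝ) (Real.logb 2 (1 + x * s))) :=
      measurable_const.min (measurable_A s)
    exact measurable_const.mul (Finset.measurable_sum _ fun b _ => hA.comp (measurable_pi_apply b))
  have hU : E = ⋃ S ∈ (Finset.univ : Finset (Finset (Fin B))),
      (E ∩ {γ | ∀ b, γ b ≤ ((2:ℝ) ^ M - 1) / s ↔ b ∈ S}) := by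
    classical
    ext γ
    simp only [Finset.mem_univ, Set.iUnion_true, Set.mem_iUnion, Set.mem_inter_iff,
      Set.mem_ofPred_eq]
    constructor
    · intro h
      exact ⟨Finset.univ.filter fun b => γ b ≤ ((2:ℝ) ^ M - 1) / s, h, by simp⟩
    · rintro ⟨S, h, _⟩
      exact h
  rw [hU, measure_biUnion_finset, ENNReal.toReal_sum (fun S _ => measure_ne_top _ _)]
  · refine Finset.sum_congr rfl fun S _ => ?_
    rw [hE, term_measure m hm B M s hs hB R S, ENNReal.toReal_mul, ENNReal.toReal_pow]
    rfl
  · intro S _ T _ hST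
    refine Set.disjoint_left.2 fun γ h1 h2 => hST ?_
    ext b
    rw [← h1.2 b, h2.2 b]
  · intro S _
    refine hEm.inter ?_
    have : {γ : Fin B → ℝ | ∀ b, γ b ≤ ((2:ℝ) ^ M - 1) / s ↔ b ∈ S} =
        ⋂ b, {γ : Fin B → ℝ | γ b ≤ ((2:ℝ) ^ M - 1) / s ↔ b ∈ S} := by
      ext; simp
    rw [this]
    refine MeasurableSet.iInter fun b => ?_
    by_cases hb : b ∈ S
    · simp only [hb, iff_true]
      exact measurableSet_le (measurable_pi_apply b) measurable_const
    · simp only [hb, iff_false, not_le]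
      exact measurableSet_lt measurable_const (measurable_pi_apply b)

lemma reindex (m : ℝ) (hm : 0 < m) (M : ℕ) (hM : 0 < M) {ι : Type*} [Fintype ι] (d : ℕ)
    (h : Fintype.card ι = d) (t : ℝ) :
    (Measure.pi fun _ : ι => nuAbar m M).real {a | ∑ k, a k < t} =
    (Measure.pi fun _ : Fin d => nuAbar m M).real {a | ∑ k, a k < t} := by
  have := nuAbar_finite m hm M hM
  let e : Fin d ≃ ι := (Fintype.equivFinOfCardEq h).symm
  have mp := measurePreserving_piCongrLeft (fun _ : ι => nuAbar m M) e
  unfold Measure.real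
  rw [← mp.measure_preimage_equiv]
  congr 2
  ext a
  simp only [Set.mem_preimage, Set.mem_ofPred_eq]
  rw [← e.sum_comp]
  simp [MeasurableEquiv.coe_piCongrLeft, Equiv.piCongrLeft_apply_apply]

lemma term_limit (m : ℝ) (hm : 0 < m) (B M : ℕ) (hM : 0 < M) (R : ℝ) (d : ℕ)
    (hd2 : ((d:ℝ) - 1) * M ≤ B * M - B * R) (S : Finset (Fin B)) :
    Tendsto (fun s : ℝ => s ^ (m * (d:ℝ)) *
      ((Measure.pi fun _ : {b // b ∈ S} => nuS m M s).real
      {a | ∑ k, a k < (B:ℝ) * R - ((B:ℝ) - (S.card : ℝ)) * M} *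
      ((muN m).real (Set.Ioi (((2:ℝ) ^ M - 1) / s))) ^ (B - S.card))) atTop
    (nhds (if S.card = d then cst m M ^ d *
      (Measure.pi fun _ : Fin d => nuAbar m M).real
        {a | ∑ k, a k < (B:ℝ) * R - ((B:ℝ) - (d : ℝ)) * M} else 0)) := by
  have hcard : Fintype.card {b // b ∈ S} = S.card := Fintype.card_coe S
  have hM' : (0:ℝ) < M := by exact_mod_cast hM
  have hq := (q_limit m hm M hM).pow (B - S.card)
  have hl := pi_limit (ι := {b // b ∈ S}) m hm M hM
    ((B:ℝ) * R - ((B:ℝ) - (S.card : ℝ)) * M)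
  rw [one_pow] at hq
  rw [hcard] at hl
  have hlq := hl.mul hq
  rcases lt_trichotomy S.card d with h | h | h
  · rw [if_neg h.ne]
    refine tendsto_const_nhds.congr' ?_
    filter_upwards [eventually_gt_atTop 0] with s hs
    rw [pi_zero m hm M hM _ _ s hs, zero_mul, mul_zero]
    have : (S.card : ℝ) + 1 ≤ d := by exact_mod_cast h
    nlinarith
  · rw [if_pos h]
    subst h
    rw [reindex m hm M hM S.card hcard, mul_one] at hlq
    refine hlq.congr fun s => ?_
    ring
  · rw [if_neg h.ne']
    have hp : 0 < m * ((S.card : ℝ) - d) := by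
      have : (d:ℝ) < S.card := by exact_mod_cast h
      exact mul_pos hm (by linarith)
    have h3 := (tendsto_rpow_neg_atTop hp).mul hlq
    rw [zero_mul] at h3
    refine h3.congr' ?_
    filter_upwards [eventually_gt_atTop 0] with s hs
    have : s ^ (m * (d:ℝ)) = s ^ (-(m * ((S.card : ℝ) - d))) * s ^ (m * (S.card : ℝ)) := by
      rw [← Real.rpow_add hs]
      congr 1
      ring
    rw [this]
    ring

/-- asymptotic coding gain constant of the lower bound to the outage
probability: s^{m d} P^ℓ_out(s,R) → K_ℓ as s → ∞, with d = d_B(R) the Singleton bound. -/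
theorem stmt_6 (m : ℝ) (hm : 0 < m) (B M : ℕ) (hB : 0 < B) (hM : 0 < M)
    (R : ℝ) (hR0 : 0 < R) (hRM : R < (M : ℝ))
    (d : ℕ) (hd : (d : ℤ) = 1 + ⌊(B : ℝ) * (1 - R / (M : ℝ))⌋)
    (K : ℝ)
    (hK : K = ((Measure.pi fun _ : Fin d => nuAbar m M)
          {a : Fin d → ℝ | ∑ k, a k < (B : ℝ) * R - ((B : ℝ) - (d : ℝ)) * (M : ℝ)}).toReal
        * (B.choose (B - d) : ℝ)
        * (m * ((2:ℝ) ^ M - 1)) ^ (m * (d : ℝ)) / (m * Real.Gamma m) ^ d) :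
    Filter.Tendsto (fun s : ℝ => s ^ (m * (d : ℝ)) * PoutL m B M s R)
      Filter.atTop (nhds K) := by
  have hM' : (0:ℝ) < M := by exact_mod_cast hM
  have hB' : (0:ℝ) < B := by exact_mod_cast hB
  have hx : (B : ℝ) * (1 - R / (M : ℝ)) * M = B * M - B * R := by field_simp
  have hfl : ((⌊(B : ℝ) * (1 - R / (M : ℝ))⌋ : ℤ) : ℝ) = (d:ℝ) - 1 := by
    have : ((d:ℤ):ℝ) = ((1 + ⌊(B : ℝ) * (1 - R / (M : ℝ))⌋ : ℤ) : ℝ) := by rw [hd]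
    push_cast at this
    linarith
  have hd2 : ((d:ℝ) - 1) * M ≤ B * M - B * R := by
    rw [← hx, ← hfl]
    exact mul_le_mul_of_nonneg_right (Int.floor_le _) hM'.le
  have hdB : d ≤ B := by
    have h1 : ((d:ℝ) - 1) * M < B * M := by
      have : 0 < B * R := by positivity
      linarith
    have h2 : (d:ℝ) - 1 < B := lt_of_mul_lt_mul_right h1 hM'.le
    have h3 : (d:ℝ) < ((B + 1 : ℕ) : ℝ) := by push_cast; linarith
    have h4 : d < B + 1 := by exact_mod_cast h3
    omega
  have hsum := tendsto_finsetSum Finset.univ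
    (fun (S : Finset (Fin B)) _ => term_limit m hm B M hM R d hd2 S)
  have hKe : K = ∑ S : Finset (Fin B), (if S.card = d then cst m M ^ d *
      (Measure.pi fun _ : Fin d => nuAbar m M).real
        {a | ∑ k, a k < (B:ℝ) * R - ((B:ℝ) - (d : ℝ)) * M} else 0) := by
    have hc := c_pos M hM
    have hcnt : (Finset.univ.filter fun S : Finset (Fin B) => S.card = d).card = B.choose d := by
      have := Finset.card_powersetCard d (Finset.univ : Finset (Fin B))
      rw [Finset.card_univ, Fintype.card_fin] at this
      rw [← this]
      congr 1
      ext S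
      simp [Finset.mem_powersetCard]
    rw [← Finset.sum_filter, Finset.sum_const, hcnt, hK, Nat.choose_symm hdB, nsmul_eq_mul,
      Real.rpow_mul_natCast (by positivity)]
    unfold cst Measure.real
    rw [div_pow]
    ring
  rw [hKe]
  refine hsum.congr' ?_
  filter_upwards [eventually_gt_atTop 0] with s hs
  rw [decomp m hm B M s hs hB R, Finset.mul_sum]
end

section
/- Let m > 0 and let B be a positive integer. For s > 1 define f_α(a; s) = (m^m / Γ(m)) · s^{−m a} · exp(−m s^{−a}) · ln s (the density of the normalized fading gain α = −ln γ / ln s for γ ∼ μ_m), and define the joint density f_𝛂(a_1, …, a_B; s) = Π_{b=1}^B f_α(a_b; s). Then for every vector (a_1, …, a_B) with all coordinates strictly positive, lim_{s → ∞} log( f_𝛂(a_1, …, a_B; s) ) / log s = −m Σ_{b=1}^B a_b. -/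
open MeasureTheory ProbabilityTheory Real Filter

/-- asymptotic SNR exponent of the joint density of the normalized fading
gains: log f_𝛂(a; s) / log s → -m Σ_b a_b for strictly positive a. -/
theorem stmt_9 (m : ℝ) (hm : 0 < m) (B : ℕ) (hB : 0 < B)
    (a : Fin B → ℝ) (ha : ∀ b, 0 < a b) :
    Filter.Tendsto (fun s : ℝ =>
        Real.log (∏ b, (m ^ m / Real.Gamma m * s ^ (-(m * a b))
          * Real.exp (-(m * s ^ (-(a b)))) * Real.log s)) / Real.log s)
      Filter.atTop (nhds (-(m * ∑ b, a b))) := by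
  have hG : 0 < m ^ m / Real.Gamma m :=
    div_pos (Real.rpow_pos_of_pos hm m) (Real.Gamma_pos_of_pos hm)
  set C : ℝ := m ^ m / Real.Gamma m with hC
  have hlog : Tendsto (fun s : ℝ => (Real.log s)⁻¹) atTop (nhds 0) :=
    tendsto_inv_atTop_zero.comp Real.tendsto_log_atTop
  have hll : Tendsto (fun s : ℝ => Real.log (Real.log s) / Real.log s) atTop (nhds 0) :=
    (Real.isLittleO_log_id_atTop.tendsto_div_nhds_zero).comp Real.tendsto_log_atTop
  have key : Tendsto (fun s : ℝ => ∑ b, (Real.log C * (Real.log s)⁻¹ + -(m * a b)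
      + -(m * s ^ (-(a b))) * (Real.log s)⁻¹ + Real.log (Real.log s) / Real.log s)) atTop
      (nhds (∑ b, (Real.log C * 0 + -(m * a b) + -(m * 0) * 0 + 0))) := by
    refine tendsto_finsetSum _ fun b _ => ?_
    exact (((hlog.const_mul _).add tendsto_const_nhds).add
      ((((tendsto_rpow_neg_atTop (ha b)).const_mul m).neg).mul hlog)).add hll
  have e : (∑ b, (Real.log C * 0 + -(m * a b) + -(m * 0) * 0 + 0)) = -(m * ∑ b, a b) := by
    simp [Finset.mul_sum]
  rw [e] at key
  refine key.congr' ?_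
  filter_upwards [eventually_gt_atTop (1 : ℝ)] with s hs
  have hs0 : 0 < s := by linarith
  have hl : 0 < Real.log s := Real.log_pos hs
  rw [Real.log_prod, Finset.sum_div]
  · refine Finset.sum_congr rfl fun b _ => ?_
    have h1 : 0 < s ^ (-(m * a b)) := Real.rpow_pos_of_pos hs0 _
    rw [Real.log_mul (by positivity) hl.ne', Real.log_mul (by positivity) (by positivity),
      Real.log_mul hG.ne' h1.ne', Real.log_exp, Real.log_rpow hs0]
    field_simp
  · intro b _
    have h1 : 0 < s ^ (-(m * a b)) := Real.rpow_pos_of_pos hs0 _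
    positivity
end

section
/- Let m > 0, let B and M be positive integers, let 0 < R ≤ M, and let 0 < ε < 1. Define S_ε = { α ∈ [0, ∞)^B : #{ b : α_b ≥ 1 − ε } ≥ B(1 − R/M) }. For s > 1, the integral I(s) = ∫_{S_ε} s^{−m Σ_{b=1}^B α_b} dα (with respect to B-dimensional Lebesgue measure) is finite, and lim_{s → ∞} −log I(s) / log s = m (1 − ε) ⌈ B(1 − R/M) ⌉. -/
open MeasureTheory Filter

lemma aux_int (B : ℕ) (L : ℝ) (hL : 0 < L) :
    IntegrableOn (fun α : Fin B → ℝ => Real.exp (-(L * ∑ b, α b)))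
      (Set.univ.pi fun _ => Set.Ici (0:ℝ)) volume := by
  have h1 : IntegrableOn (fun x : ℝ => Real.exp (-L * x)) (Set.Ici 0) volume := by
    rw [integrableOn_Ici_iff_integrableOn_Ioi]
    exact integrableOn_exp_mul_Ioi (by linarith) 0
  unfold IntegrableOn
  rw [volume_pi, Measure.restrict_pi_pi]
  have := Integrable.fintype_prod (ι := Fin B) (E := ℝ)
    (f := fun _ (x : ℝ) => Real.exp (-L * x))
    (μ := fun _ => (volume : Measure ℝ).restrict (Set.Ici 0)) (fun _ => h1)
  refine this.congr (Eventually.of_forall fun α => ?_)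
  simp only
  rw [← Real.exp_sum, ← Finset.mul_sum]
  congr 1
  ring

lemma aux_lim (m a c B : ℝ) (hm : 0 < m) :
    Tendsto (fun s : ℝ => (m * Real.log s * a + B * Real.log (m * Real.log s) + c) / Real.log s)
      atTop (nhds (m * a)) := by
  have h1 : Tendsto (fun s : ℝ => m * Real.log s) atTop atTop :=
    Real.tendsto_log_atTop.const_mul_atTop hm
  have h2 : Tendsto (fun x : ℝ => Real.log x / x) atTop (nhds 0) :=
    Real.isLittleO_log_id_atTop.tendsto_div_nhds_zero
  have h3 := (h2.comp h1).const_mul (B * m)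
  have h4 : Tendsto (fun s : ℝ => c / Real.log s) atTop (nhds 0) :=
    tendsto_const_nhds.div_atTop Real.tendsto_log_atTop
  have h5 := (h3.add h4).const_add (m * a)
  simp only [mul_zero, add_zero] at h5
  refine h5.congr' ?_
  filter_upwards [eventually_gt_atTop 1] with s hs
  have : 0 < Real.log s := Real.log_pos hs
  simp only [Function.comp]
  field_simp
  ring

/-- the Laplace-principle exponent of I(s) = ∫_{S_ε} s^{-m Σ_b α_b} dα is
m(1-ε)⌈B(1-R/M)⌉. -/
theorem stmt_16 (m : ℝ) (hm : 0 < m) (B M : ℕ) (hB : 0 < B) (hM : 0 < M)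
    (R : ℝ) (hR0 : 0 < R) (hRM : R ≤ (M : ℝ)) (ε : ℝ) (hε0 : 0 < ε) (hε1 : ε < 1)
    (Sε : Set (Fin B → ℝ))
    (hSε : Sε = {α : Fin B → ℝ | (∀ b, 0 ≤ α b) ∧
      (B : ℝ) * (1 - R / (M : ℝ))
        ≤ ((Finset.univ.filter fun b => 1 - ε ≤ α b).card : ℝ)})
    (k : ℕ) (hk : (k : ℤ) = ⌈(B : ℝ) * (1 - R / (M : ℝ))⌉) :
    (∀ s : ℝ, 1 < s →
      IntegrableOn (fun α : Fin B → ℝ => s ^ (-(m * ∑ b, α b))) Sε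
        MeasureTheory.volume) ∧
    Filter.Tendsto (fun s : ℝ =>
        -Real.log (∫ α in Sε, s ^ (-(m * ∑ b, α b))) / Real.log s)
      Filter.atTop (nhds (m * (1 - ε) * (k : ℝ))) := by
  have hpow : ∀ s : ℝ, 1 < s → (fun α : Fin B → ℝ => s ^ (-(m * ∑ b, α b)))
      = fun α => Real.exp (-((m * Real.log s) * ∑ b, α b)) := by
    intro s hs
    funext α
    rw [Real.rpow_def_of_pos (by linarith)]
    congr 1; ring
  have hkB : k ≤ B := by
    have h : ⌈(B : ℝ) * (1 - R / (M : ℝ))⌉ ≤ (B : ℤ) := by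
      rw [Int.ceil_le]
      have : 0 ≤ R / (M : ℝ) := by positivity
      have hB' : (0:ℝ) ≤ B := by positivity
      push_cast
      nlinarith
    omega
  have hmem : ∀ α : Fin B → ℝ, α ∈ Sε ↔ (∀ b, 0 ≤ α b) ∧
      k ≤ (Finset.univ.filter fun b => 1 - ε ≤ α b).card := by
    intro α
    rw [hSε, Set.mem_setOf_eq]
    refine and_congr_right fun _ => ?_
    rw [← Int.ofNat_le, hk, Int.ceil_le]
    simp
  have hsub : Sε ⊆ Set.univ.pi fun _ => Set.Ici (0:ℝ) := by
    intro α hα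
    have := ((hmem α).1 hα).1
    intro b _
    exact this b
  have hint : ∀ L : ℝ, 0 < L →
      IntegrableOn (fun α : Fin B → ℝ => Real.exp (-(L * ∑ b, α b))) Sε volume :=
    fun L hL => (aux_int B L hL).mono_set hsub
  have hmeas : MeasurableSet Sε := by
    have : Sε = {α : Fin B → ℝ | ∀ b, 0 ≤ α b} ∩
        {α | (k:ℝ) ≤ ∑ b, Set.indicator {x : ℝ | 1 - ε ≤ x} (fun _ => (1:ℝ)) (α b)} := by
      ext α
      rw [hmem]
      simp only [Set.mem_inter_iff, Set.mem_setOf_eq, Set.indicator_apply, Finset.sum_boole,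
        Nat.cast_le]
    rw [this]
    refine MeasurableSet.inter ?_ ?_
    · simp only [Set.setOf_forall]
      exact MeasurableSet.iInter fun b => measurableSet_le measurable_const (measurable_pi_apply b)
    · refine measurableSet_le measurable_const ?_
      refine Finset.measurable_sum _ fun b _ => ?_
      exact (measurable_const.indicator measurableSet_Ici).comp (measurable_pi_apply b)
  have hsumge : ∀ α ∈ Sε, (k:ℝ) * (1 - ε) ≤ ∑ b, α b := by
    intro α hα
    obtain ⟨h0, h1⟩ := (hmem α).1 hα
    calc (k:ℝ) * (1 - ε)
        ≤ ((Finset.univ.filter fun b => 1 - ε ≤ α b).card : ℝ) * (1 - ε) := by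
          have : (k:ℝ) ≤ ((Finset.univ.filter fun b => 1 - ε ≤ α b).card : ℝ) := by
            exact_mod_cast h1
          nlinarith
      _ = ∑ b ∈ Finset.univ.filter (fun b => 1 - ε ≤ α b), (1 - ε) := by
          rw [Finset.sum_const, nsmul_eq_mul]
      _ ≤ ∑ b ∈ Finset.univ.filter (fun b => 1 - ε ≤ α b), α b :=
          Finset.sum_le_sum fun b hb => (Finset.mem_filter.1 hb).2
      _ ≤ ∑ b, α b := Finset.sum_le_sum_of_subset_of_nonneg (Finset.filter_subset _ _)
          fun b _ _ => h0 b
  refine ⟨fun s hs => ?_, ?_⟩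
  · rw [hpow s hs]
    exact hint _ (mul_pos hm (Real.log_pos hs))
  set a : ℝ := (k:ℝ) * (1 - ε) with ha
  set C : ℝ := ∫ α in Sε, Real.exp (-((1:ℝ) * ∑ b, α b)) with hC
  have hC0 : 0 ≤ C := integral_nonneg fun α => (Real.exp_pos _).le
  -- upper bound
  have hup : ∀ L : ℝ, 1 ≤ L → ∫ α in Sε, Real.exp (-(L * ∑ b, α b))
      ≤ Real.exp (-((L - 1) * a)) * (C + 1) := by
    intro L hL
    calc ∫ α in Sε, Real.exp (-(L * ∑ b, α b))
        ≤ ∫ α in Sε, Real.exp (-((L - 1) * a)) * Real.exp (-((1:ℝ) * ∑ b, α b)) := by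
          refine setIntegral_mono_on (hint L (by linarith))
            ((hint 1 one_pos).const_mul _) hmeas fun α hα => ?_
          rw [← Real.exp_add, Real.exp_le_exp]
          have := hsumge α hα
          nlinarith
      _ = Real.exp (-((L - 1) * a)) * C := by rw [integral_const_mul]
      _ ≤ _ := by
          have := Real.exp_pos (-((L - 1) * a))
          nlinarith
  -- lower bound
  have hlow : ∀ L : ℝ, 1 ≤ L → Real.exp (-(L * a + B)) * (L⁻¹) ^ B
      ≤ ∫ α in Sε, Real.exp (-(L * ∑ b, α b)) := by
    intro L hL
    have hL0 : 0 < L := by linarith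
    have hLi : 0 < L⁻¹ := inv_pos.2 hL0
    let c : Fin B → ℝ := fun b => if (b : ℕ) < k then 1 - ε else 0
    have hcard : (Finset.univ.filter fun b : Fin B => (b : ℕ) < k).card = k := by
      rw [Fin.card_filter_val_lt]; omega
    have hcs : ∑ b, c b = a := by
      simp only [c]
      rw [← Finset.sum_filter, Finset.sum_const, hcard, nsmul_eq_mul]
    have hc0 : ∀ b, 0 ≤ c b := by
      intro b; simp only [c]; split_ifs <;> linarith
    let K : Set (Fin B → ℝ) := Set.Icc c (fun b => c b + L⁻¹)
    have hKS : K ⊆ Sε := by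
      intro α hα
      rw [hmem]
      refine ⟨fun b => (hc0 b).trans (hα.1 b), ?_⟩
      calc k = _ := hcard.symm
        _ ≤ _ := by
          refine Finset.card_le_card fun b hb => ?_
          simp only [Finset.mem_filter, Finset.mem_univ, true_and] at hb ⊢
          have := hα.1 b
          simp only [c, if_pos hb] at this
          exact this
    have hvol : volume.real K = (L⁻¹) ^ B := by
      rw [Measure.real, Real.volume_Icc_pi_toReal (fun b => by simp only; linarith)]
      simp
    have hfin : volume K ≠ ⊤ := (isCompact_Icc (a := c)).measure_lt_top.ne
    calc Real.exp (-(L * a + B)) * (L⁻¹) ^ B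
        = ∫ α in K, Real.exp (-(L * a + B)) := by
          rw [setIntegral_const, hvol, smul_eq_mul, mul_comm]
      _ ≤ ∫ α in K, Real.exp (-(L * ∑ b, α b)) := by
          refine setIntegral_mono_on (integrableOn_const hfin)
            ((hint L hL0).mono_set hKS) measurableSet_Icc fun α hα => ?_
          rw [Real.exp_le_exp]
          have h1 : ∑ b, α b ≤ ∑ b, (c b + L⁻¹) := Finset.sum_le_sum fun b _ => hα.2 b
          rw [Finset.sum_add_distrib, hcs] at h1
          simp only [Finset.sum_const, Finset.card_univ, Fintype.card_fin, nsmul_eq_mul] at h1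
          have h2 := mul_le_mul_of_nonneg_left h1 hL0.le
          have h3 : L * (a + B * L⁻¹) = L * a + B := by field_simp
          linarith
      _ ≤ _ := setIntegral_mono_set (hint L hL0)
          (Eventually.of_forall fun α => (Real.exp_pos _).le) hKS.eventuallyLE
  have hL1 : ∀ᶠ s : ℝ in atTop, 1 ≤ m * Real.log s :=
    (Real.tendsto_log_atTop.const_mul_atTop hm).eventually_ge_atTop 1
  have hval : m * (1 - ε) * (k : ℝ) = m * a := by rw [ha]; ring
  rw [hval]
  refine tendsto_of_tendsto_of_tendsto_of_le_of_le'
    (aux_lim m a (-a - Real.log (C + 1)) 0 hm) (aux_lim m a B B hm) ?_ ?_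
  · filter_upwards [hL1, eventually_gt_atTop 1] with s hs1 hs
    rw [hpow s hs]
    have hl := Real.log_pos hs
    refine div_le_div_of_nonneg_right ?_ hl.le
    have h1 := hlow _ hs1
    have hpos : 0 < ∫ α in Sε, Real.exp (-((m * Real.log s) * ∑ b, α b)) :=
      lt_of_lt_of_le (by positivity) h1
    have h2 := Real.log_le_log hpos (hup _ hs1)
    rw [Real.log_mul (Real.exp_pos _).ne' (by positivity), Real.log_exp] at h2
    linarith
  · filter_upwards [hL1, eventually_gt_atTop 1] with s hs1 hs
    rw [hpow s hs]
    have hl := Real.log_pos hs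
    refine div_le_div_of_nonneg_right ?_ hl.le
    have h2 := Real.log_le_log (by positivity) (hlow _ hs1)
    rw [Real.log_mul (Real.exp_pos _).ne' (by positivity), Real.log_exp, Real.log_pow,
      Real.log_inv] at h2
    linarith
end
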